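/- Let m ≥ 1 and r ≥ 1 be integers, M ≥ 1, c_1,…,c_M > 0 fixed, and b_1,…,b_M > 0 with mean b̄ = (∑_{j=1}^M b_j)/M. Then ∫_0^∞ [1 − ∏_{j=1}^M (1 − S_m(b_j t) e^{−b_j t}) · ∏_{j=1}^M (1 − S_m(c_j t) e^{−c_j t})] t^{r−1} dt ≥ ∫_0^∞ [1 − (1 − S_m(b̄ t) e^{−b̄ t})^M · ∏_{j=1}^M (1 − S_m(c_j t) e^{−c_j t})] t^{r−1} dt. -/

import Mathlib

open MeasureTheory

/-- `Sm m y` is the `m`-th partial sum of the exponential series. -/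
noncomputable def Sm (m : ℕ) (y : ℝ) : ℝ := ∑ i ∈ Finset.range m, y ^ i / (Nat.factorial i)

lemma Sm_hasDeriv (n : ℕ) (y : ℝ) : HasDerivAt (Sm (n+1)) (Sm n y) y := by
  induction n with
  | zero =>
    have : Sm (0+1) = fun _ => (1:ℝ) := by funext x; simp [Sm]
    rw [this]; simpa [Sm] using hasDerivAt_const y (1:ℝ)
  | succ n ih =>
    have h1 : Sm (n+1+1) = fun x => Sm (n+1) x + x^(n+1)/(Nat.factorial (n+1)) := by
      funext x; simp [Sm, Finset.sum_range_succ]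
    have h2 : Sm (n+1) y = Sm n y + y^n/(Nat.factorial n) := by
      simp [Sm, Finset.sum_range_succ]
    rw [h1, h2]
    refine ih.add (((hasDerivAt_pow (n+1) y).div_const _).congr_deriv ?_)
    have : (Nat.factorial n : ℝ) ≠ 0 := by positivity
    rw [Nat.factorial_succ]; push_cast
    field_simp

/-- the gamma distribution function -/
noncomputable def FF (m : ℕ) (y : ℝ) : ℝ := 1 - Sm m y * Real.exp (-y)

/-- the gamma density -/
noncomputable def ff (n : ℕ) (y : ℝ) : ℝ := y^n/(Nat.factorial n) * Real.exp (-y)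

lemma exp_neg_hasDeriv (y : ℝ) : HasDerivAt (fun x : ℝ => Real.exp (-x)) (-Real.exp (-y)) y := by
  simpa using (hasDerivAt_neg y).exp

lemma FF_hasDeriv (n : ℕ) (y : ℝ) : HasDerivAt (FF (n+1)) (ff n y) y := by
  have h2 : Sm (n+1) y = Sm n y + y^n/(Nat.factorial n) := by
    simp [Sm, Finset.sum_range_succ]
  refine (((Sm_hasDeriv n y).mul (exp_neg_hasDeriv y)).const_sub 1).congr_deriv ?_
  rw [h2, ff]; ring

lemma Sm_nonneg (m : ℕ) {y : ℝ} (hy : 0 ≤ y) : 0 ≤ Sm m y :=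
  Finset.sum_nonneg fun i _ => by positivity

lemma FF_pos (m : ℕ) {y : ℝ} (hy : 0 < y) : 0 < FF m y := by
  have h1 : Sm (m+1) y ≤ Real.exp y := Real.sum_le_exp_of_nonneg hy.le _
  have h2 : Sm (m+1) y = Sm m y + y^m/(Nat.factorial m) := by
    simp [Sm, Finset.sum_range_succ]
  have h3 : 0 < y^m/(Nat.factorial m) := by positivity
  have h4 : Sm m y * Real.exp (-y) < Real.exp y * Real.exp (-y) :=
    mul_lt_mul_of_pos_right (by linarith) (Real.exp_pos _)
  rw [← Real.exp_add] at h4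
  simp at h4
  unfold FF; linarith

lemma FF_le_one (m : ℕ) {y : ℝ} (hy : 0 ≤ y) : FF m y ≤ 1 := by
  have := mul_nonneg (Sm_nonneg m hy) (Real.exp_pos (-y)).le
  unfold FF; linarith

lemma ff_nonneg (n : ℕ) {y : ℝ} (hy : 0 ≤ y) : 0 ≤ ff n y := by
  unfold ff; positivity

lemma ff_hasDeriv (n : ℕ) {y : ℝ} (hy : 0 < y) : HasDerivAt (ff n) (ff n y * (n - y) / y) y := by
  refine (((hasDerivAt_pow n y).div_const _).mul (exp_neg_hasDeriv y)).congr_deriv ?_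
  unfold ff
  rcases n with _ | n
  · simp; field_simp
  · simp only [Nat.add_sub_cancel]
    field_simp
    ring

lemma FF_zero (n : ℕ) : FF (n+1) 0 = 0 := by
  simp [FF, Sm, Finset.sum_range_succ']

lemma FF_cont (n : ℕ) : Continuous (FF n) := by
  unfold FF Sm; fun_prop

lemma ff_cont (n : ℕ) : Continuous (ff n) := by
  unfold ff; fun_prop

lemma GG_nonneg (n : ℕ) {y : ℝ} (hy : 0 ≤ y) : 0 ≤ y * ff n y - FF (n+1) y * (n - y) := by
  have hmono : MonotoneOn (fun y : ℝ => y * ff n y - FF (n+1) y * (n - y)) (Set.Ici 0) := by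
    have hc1 := FF_cont (n+1)
    have hc2 := ff_cont n
    refine monotoneOn_of_hasDerivWithinAt_nonneg (f' := fun y => ff n y + FF (n+1) y)
      (convex_Ici 0) (by fun_prop) ?_ ?_
    · intro x hx
      rw [interior_Ici] at hx
      have hx : 0 < x := hx
      refine HasDerivAt.hasDerivWithinAt ?_
      refine (((hasDerivAt_id x).mul (ff_hasDeriv n hx)).sub
        ((FF_hasDeriv n x).mul ((hasDerivAt_id x).const_sub (n:ℝ)))).congr_deriv ?_
      simp only [id]
      field_simp
      ring
    · intro x hx
      rw [interior_Ici] at hx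
      have hx : 0 < x := hx
      exact add_nonneg (ff_nonneg n hx.le) (FF_pos _ hx).le
  have := hmono (Set.mem_Ici.2 le_rfl) (Set.mem_Ici.2 hy) hy
  simpa [FF_zero] using this

lemma logFF_concave (n : ℕ) : ConcaveOn ℝ (Set.Ioi 0) (fun y => Real.log (FF (n+1) y)) := by
  have hd : ∀ x : ℝ, 0 < x → HasDerivAt (fun y => Real.log (FF (n+1) y))
      (ff n x / FF (n+1) x) x := fun x hx => (FF_hasDeriv n x).log (FF_pos _ hx).ne'
  have hd2 : ∀ x : ℝ, 0 < x → HasDerivAt (fun y => ff n y / FF (n+1) y)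
      ((ff n x * (n - x) / x * FF (n+1) x - ff n x * ff n x) / FF (n+1) x ^ 2) x :=
    fun x hx => (ff_hasDeriv n hx).div (FF_hasDeriv n x) (FF_pos _ hx).ne'
  refine concaveOn_of_hasDerivWithinAt2_nonpos (convex_Ioi 0)
    (f' := fun x => ff n x / FF (n+1) x)
    (f'' := fun x => (ff n x * (n - x) / x * FF (n+1) x - ff n x * ff n x) / FF (n+1) x ^ 2)
    (fun x hx => (hd x hx).continuousAt.continuousWithinAt) ?_ ?_ ?_
  · intro x hx
    rw [interior_Ioi] at hx
    exact (hd x hx).hasDerivWithinAt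
  · intro x hx
    rw [interior_Ioi] at hx
    exact (hd2 x hx).hasDerivWithinAt
  · intro x hx
    rw [interior_Ioi] at hx
    have hx : 0 < x := hx
    refine div_nonpos_of_nonpos_of_nonneg ?_ (sq_nonneg _)
    have h1 := mul_nonneg (ff_nonneg n hx.le) (GG_nonneg n hx.le)
    have h2 : ff n x * (n - x) / x * FF (n+1) x - ff n x * ff n x
        = -(ff n x * (x * ff n x - FF (n+1) x * (n - x))) / x := by
      field_simp; ring
    rw [h2]
    exact div_nonpos_of_nonpos_of_nonneg (by linarith) hx.le

lemma prod_le (n M : ℕ) (hM : 1 ≤ M) (b : ℕ → ℝ) (hb : ∀ j, 1 ≤ j → 0 < b j) :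
    ∏ j ∈ Finset.Icc 1 M, FF (n+1) (b j) ≤ FF (n+1) ((∑ j ∈ Finset.Icc 1 M, b j) / M) ^ M := by
  have hM' : (0:ℝ) < M := by exact_mod_cast hM
  have hpos : ∀ j ∈ Finset.Icc 1 M, 0 < b j := fun j hj => hb j (Finset.mem_Icc.1 hj).1
  have hs : 0 < (∑ j ∈ Finset.Icc 1 M, b j) / M :=
    div_pos (Finset.sum_pos hpos ⟨1, by simp [hM]⟩) hM'
  have hJ := (logFF_concave n).le_map_sum (t := Finset.Icc 1 M) (w := fun _ => (1:ℝ)/M) (p := b)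
    (fun _ _ => by positivity) (by simp; field_simp) hpos
  simp only [smul_eq_mul, ← Finset.mul_sum] at hJ
  rw [← Real.log_prod (fun j hj => (FF_pos _ (hpos j hj)).ne'),
    one_div_mul_eq_div, one_div_mul_eq_div, div_le_iff₀ hM', mul_comm, ← Real.log_pow] at hJ
  exact (Real.log_le_log_iff (Finset.prod_pos fun j hj => FF_pos _ (hpos j hj))
    (pow_pos (FF_pos _ hs) _)).1 hJ

lemma one_sub_prod_le (s : Finset ℕ) (g : ℕ → ℝ) (h0 : ∀ j ∈ s, 0 ≤ g j) (h1 : ∀ j ∈ s, g j ≤ 1) :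
    1 - ∏ j ∈ s, g j ≤ ∑ j ∈ s, (1 - g j) := by
  induction s using Finset.induction_on with
  | empty => simp
  | insert a s ha ih =>
    rw [Finset.prod_insert ha, Finset.sum_insert ha]
    have ih := ih (fun j hj => h0 j (Finset.mem_insert_of_mem hj))
      (fun j hj => h1 j (Finset.mem_insert_of_mem hj))
    have hp : ∏ j ∈ s, g j ≤ 1 := Finset.prod_le_one
      (fun j hj => h0 j (Finset.mem_insert_of_mem hj))
      (fun j hj => h1 j (Finset.mem_insert_of_mem hj))
    have ha0 := h0 a (Finset.mem_insert_self _ _)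
    have ha1 := h1 a (Finset.mem_insert_self _ _)
    nlinarith

lemma tail_integrable (m k : ℕ) {a : ℝ} (ha : 0 < a) :
    IntegrableOn (fun t : ℝ => (1 - FF m (a * t)) * t ^ k) (Set.Ioi 0) := by
  have : (fun t : ℝ => (1 - FF m (a * t)) * t ^ k) = fun t => ∑ i ∈ Finset.range m,
      (a ^ i / (Nat.factorial i)) * (t ^ (i + k) * Real.exp (-a * t)) := by
    funext t
    simp only [FF, Sm, sub_sub_cancel, Finset.sum_mul]
    refine Finset.sum_congr rfl fun i _ => ?_
    rw [mul_pow, pow_add, neg_mul]; ring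
  rw [this]
  refine integrable_finsetSum _ fun i _ => Integrable.const_mul ?_ _
  have := integrableOn_rpow_mul_exp_neg_mul_rpow (p := 1) (s := ((i+k : ℕ) : ℝ)) (b := a)
    (by have : (0:ℝ) ≤ ((i+k : ℕ) : ℝ) := Nat.cast_nonneg _
        linarith) one_pos ha
  simp only [Real.rpow_natCast, Real.rpow_one] at this
  exact this

theorem integral_ge_uniformized
    (m r M : ℕ) (hm : 1 ≤ m) (hr : 1 ≤ r) (hM : 1 ≤ M)
    (c : ℕ → ℝ) (hc : ∀ j, 1 ≤ j → 0 < c j)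
    (b : ℕ → ℝ) (hb : ∀ j, 1 ≤ j → 0 < b j) :
    ∫ t in Set.Ioi (0 : ℝ),
        (1 - (∏ j ∈ Finset.Icc 1 M, (1 - Sm m (b j * t) * Real.exp (-(b j * t)))) *
          ∏ j ∈ Finset.Icc 1 M, (1 - Sm m (c j * t) * Real.exp (-(c j * t)))) * t ^ (r - 1)
      ≥ ∫ t in Set.Ioi (0 : ℝ),
        (1 - (1 - Sm m (((∑ j ∈ Finset.Icc 1 M, b j) / M) * t) *
              Real.exp (-(((∑ j ∈ Finset.Icc 1 M, b j) / M) * t))) ^ M *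
          ∏ j ∈ Finset.Icc 1 M, (1 - Sm m (c j * t) * Real.exp (-(c j * t)))) * t ^ (r - 1) := by
  obtain ⟨n, rfl⟩ : ∃ n, m = n + 1 := ⟨m - 1, by omega⟩
  change (∫ t in Set.Ioi (0 : ℝ),
        (1 - (∏ j ∈ Finset.Icc 1 M, FF (n+1) (b j * t)) *
          ∏ j ∈ Finset.Icc 1 M, FF (n+1) (c j * t)) * t ^ (r - 1)) ≥ ∫ t in Set.Ioi (0 : ℝ),
        (1 - (FF (n+1) (((∑ j ∈ Finset.Icc 1 M, b j) / M) * t)) ^ M *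
          ∏ j ∈ Finset.Icc 1 M, FF (n+1) (c j * t)) * t ^ (r - 1)
  have hM' : (0:ℝ) < M := by exact_mod_cast hM
  have hs : 0 < (∑ j ∈ Finset.Icc 1 M, b j) / M :=
    div_pos (Finset.sum_pos (fun j hj => hb j (Finset.mem_Icc.1 hj).1) ⟨1, by simp [hM]⟩) hM'
  have hF0 : ∀ (d : ℕ → ℝ), (∀ j, 1 ≤ j → 0 < d j) → ∀ t : ℝ, 0 < t → ∀ j ∈ Finset.Icc 1 M,
      0 ≤ FF (n+1) (d j * t) := fun d hd t ht j hj =>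
    (FF_pos _ (mul_pos (hd j (Finset.mem_Icc.1 hj).1) ht)).le
  have hF1 : ∀ (d : ℕ → ℝ), (∀ j, 1 ≤ j → 0 < d j) → ∀ t : ℝ, 0 < t → ∀ j ∈ Finset.Icc 1 M,
      FF (n+1) (d j * t) ≤ 1 := fun d hd t ht j hj =>
    FF_le_one _ (mul_pos (hd j (Finset.mem_Icc.1 hj).1) ht).le
  have hP0 := fun d hd t ht => Finset.prod_nonneg (hF0 d hd t ht)
  have hP1 := fun d hd t ht => Finset.prod_le_one (hF0 d hd t ht) (hF1 d hd t ht)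
  refine integral_mono_of_nonneg ?_ ?_ ?_
  · refine (ae_restrict_iff' measurableSet_Ioi).2 (Filter.Eventually.of_forall fun t ht => ?_)
    have ht : 0 < t := ht
    have h1 : FF (n+1) (((∑ j ∈ Finset.Icc 1 M, b j) / M) * t) ^ M ≤ 1 :=
      pow_le_one₀ (FF_pos _ (mul_pos hs ht)).le (FF_le_one _ (mul_pos hs ht).le)
    have := mul_le_one₀ h1 (hP0 c hc t ht) (hP1 c hc t ht)
    exact mul_nonneg (by linarith) (by positivity)
  · have hdom : IntegrableOn (fun t : ℝ =>
        (∑ j ∈ Finset.Icc 1 M, (1 - FF (n+1) (b j * t)) * t ^ (r-1)) +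
        ∑ j ∈ Finset.Icc 1 M, (1 - FF (n+1) (c j * t)) * t ^ (r-1)) (Set.Ioi 0) := by
      refine Integrable.add ?_ ?_
      · exact integrable_finsetSum _ fun j hj =>
          tail_integrable _ _ (hb j (Finset.mem_Icc.1 hj).1)
      · exact integrable_finsetSum _ fun j hj =>
          tail_integrable _ _ (hc j (Finset.mem_Icc.1 hj).1)
    refine Integrable.mono' hdom ?_ ?_
    · have := FF_cont (n+1)
      exact Continuous.aestronglyMeasurable (by fun_prop)
    · refine (ae_restrict_iff' measurableSet_Ioi).2 (Filter.Eventually.of_forall fun t ht => ?_)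
      have ht : 0 < t := ht
      have hb0 := hP0 b hb t ht
      have hb1 := hP1 b hb t ht
      have hc0 := hP0 c hc t ht
      have hc1 := hP1 c hc t ht
      have hbs := one_sub_prod_le _ _ (hF0 b hb t ht) (hF1 b hb t ht)
      have hcs := one_sub_prod_le _ _ (hF0 c hc t ht) (hF1 c hc t ht)
      have hle := mul_le_one₀ hb1 hc0 hc1
      rw [Real.norm_of_nonneg (mul_nonneg (by linarith) (by positivity)),
        ← Finset.sum_mul, ← Finset.sum_mul, ← add_mul]
      refine mul_le_mul_of_nonneg_right ?_ (by positivity)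
      nlinarith
  · refine (ae_restrict_iff' measurableSet_Ioi).2 (Filter.Eventually.of_forall fun t ht => ?_)
    have ht : 0 < t := ht
    have h := prod_le n M hM (fun j => b j * t) (fun j hj => mul_pos (hb j hj) ht)
    rw [← Finset.sum_mul, mul_div_right_comm] at h
    refine mul_le_mul_of_nonneg_right ?_ (by positivity)
    have := mul_le_mul_of_nonneg_right h (hP0 c hc t ht)
    linarith
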